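/- Let 𝔤 be a finite-dimensional real Lie algebra with 𝔤 = 𝔷(𝔤) ⊕ 𝔤₁ ⊕ ⋯ ⊕ 𝔤_r, where 𝔷(𝔤) is the center and each 𝔤ᵢ is an ideal of 𝔤 that is a simple Lie algebra with negative-definite Killing form. For each i let K̃ᵢ denote the symmetric bilinear form on 𝔤 obtained by extending the Killing form of 𝔤ᵢ by zero on the other summands. Then a symmetric bilinear form B on 𝔤 is invariant if and only if there exist real numbers c₁, …, c_r and a symmetric bilinear form B₀ on 𝔷(𝔤), extended by zero to 𝔤, such that B = B₀ + c₁K̃₁ + ⋯ + c_rK̃_r. In particular, K̃₁, …, K̃_r restrict to a basis of the space of invariant symmetric bilinear forms on 𝔤₁ ⊕ ⋯ ⊕ 𝔤_r, and the space of invariant symmetric bilinear forms on 𝔤 has dimension m(m+1)/2 + r, where m = dim 𝔷(𝔤). -/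

import Mathlib

/-- The space of invariant symmetric bilinear forms on a real Lie algebra `L`. -/
noncomputable def invSymmForms (L : Type*) [LieRing L] [LieAlgebra ℝ L] :
    Submodule ℝ (L →ₗ[ℝ] L →ₗ[ℝ] ℝ) where
  carrier := {B | (∀ x y z : L, B ⁅x, y⁆ z = B x ⁅y, z⁆) ∧ ∀ x y : L, B x y = B y x}
  add_mem' := by
    rintro B C ⟨hB1, hB2⟩ ⟨hC1, hC2⟩
    exact ⟨fun x y z => by simp [hB1 x y z, hC1 x y z],
      fun x y => by simp [hB2 x y, hC2 x y]⟩
  zero_mem' := ⟨fun _ _ _ => by simp, fun _ _ => by simp⟩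
  smul_mem' := by
    rintro c B ⟨h1, h2⟩
    exact ⟨fun x y z => by simp [h1 x y z], fun x y => by simp [h2 x y]⟩

/-! An invariant form pairs a perfect ideal to zero with every ideal it commutes with, so an
invariant symmetric form on `𝔤` is determined by its restrictions to the summands, which can be
prescribed freely. On the centre invariance is no condition. On a simple summand with a definite
invariant form `P`, any invariant symmetric form `B` has a real eigenvalue `c` relative to `P`, by the
spectral theorem; the radical of `B - c • P` is then a nonzero ideal, so `B = c • P`. -/

open LieAlgebra
open LinearMap (BilinForm)
open scoped InnerProductSpace

section LinearAlgebra

variable {R M ι : Type*} [CommRing R] [AddCommGroup M] [Module R M]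

/-- The space of symmetric bilinear forms on `M`. -/
def symmForms (R M : Type*) [CommRing R] [AddCommGroup M] [Module R M] :
    Submodule R (BilinForm R M) where
  carrier := {B | B.IsSymm}
  add_mem' hB hC := hB.add hC
  zero_mem' := BilinForm.isSymm_zero
  smul_mem' c _ hB := hB.smul c

/-- The values of a symmetric bilinear form on unordered pairs of basis vectors are free parameters
for the space of symmetric bilinear forms. -/
noncomputable def symmFormsEquivFun (b : Module.Basis ι R M) :
    symmForms R M ≃ₗ[R] (Sym2 ι → R) where
  toFun B := Sym2.lift ⟨fun i j ↦ B.1 (b i) (b j), fun _ _ ↦ B.2.eq _ _⟩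
  map_add' B C := funext fun s ↦ s.ind fun _ _ ↦ rfl
  map_smul' c B := funext fun s ↦ s.ind fun _ _ ↦ rfl
  invFun f := ⟨b.constr R fun i ↦ b.constr R fun j ↦ f s(i, j),
    (BilinForm.isSymm_iff_basis b).2 fun i j ↦ by simp [Sym2.eq_swap]⟩
  left_inv B := Subtype.ext <| b.ext fun i ↦ b.ext fun j ↦ by simp
  right_inv f := funext fun s ↦ s.ind fun _ _ ↦ by simp

theorem finrank_symmForms [StrongRankCondition R] [Module.Free R M] [Module.Finite R M] :
    Module.finrank R (symmForms R M) = Module.finrank R M * (Module.finrank R M + 1) / 2 := by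
  have b := Module.finBasis R M
  rw [(symmFormsEquivFun b).finrank_eq, Module.finrank_fintype_fun_eq_card, Sym2.card,
    Nat.choose_two_right, Fintype.card_fin, Nat.add_sub_cancel, mul_comm]

end LinearAlgebra

section Biorthogonal

variable {R V ι : Type*} {W : ι → Type*} [Ring R] [AddCommGroup V] [Module R V]
  [∀ i, AddCommGroup (W i)] [∀ i, Module R (W i)] {ρ : ∀ i, V →ₗ[R] W i} {v : ι → V}

theorem map_sum_smul_of_pairwise_map_eq_zero [Fintype ι] (h : Pairwise fun i j ↦ ρ i (v j) = 0)
    (c : ι → R) (i : ι) : ρ i (∑ j, c j • v j) = c i • ρ i (v i) := by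
  rw [map_sum, Finset.sum_eq_single i (fun j _ hj ↦ by rw [map_smul, h hj.symm, smul_zero])
    (by simp), map_smul]

theorem linearIndependent_of_pairwise_map_eq_zero [Finite ι] [IsDomain R]
    [∀ i, Module.IsTorsionFree R (W i)] (h : Pairwise fun i j ↦ ρ i (v j) = 0)
    (h₀ : ∀ i, ρ i (v i) ≠ 0) : LinearIndependent R v := by
  have := Fintype.ofFinite ι
  refine Fintype.linearIndependent_iff.2 fun c hc i ↦ ?_
  have hi := map_sum_smul_of_pairwise_map_eq_zero h c i
  rw [hc, map_zero] at hi
  exact (smul_eq_zero.1 hi.symm).resolve_right (h₀ i)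

end Biorthogonal

section Eigenvector

theorem exists_ne_zero_apply_eq_mul_inner {V : Type*} [NormedAddCommGroup V]
    [InnerProductSpace ℝ V] [FiniteDimensional ℝ V] [Nontrivial V] {B : BilinForm ℝ V}
    (hB : B.IsSymm) : ∃ (c : ℝ) (v : V), v ≠ 0 ∧ ∀ w, B v w = c * ⟪v, w⟫_ℝ := by
  have hnd : (innerₗ V).Nondegenerate :=
    ⟨fun x h ↦ inner_self_eq_zero.1 (h x), fun x h ↦ inner_self_eq_zero.1 (h x)⟩
  let T := B.symmCompOfNondegenerate (innerₗ V) hnd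
  have hTB (x y : V) : ⟪T x, y⟫_ℝ = B x y := B.symmCompOfNondegenerate_left_apply hnd y x
  have hT : T.IsSymmetric := fun x y ↦ by rw [hTB, real_inner_comm, hTB, hB.eq]
  obtain ⟨v, hv⟩ := hT.hasEigenvalue_iSup_of_finiteDimensional.exists_hasEigenvector
  exact ⟨_, v, hv.2, fun w ↦ by rw [← hTB, hv.apply_eq_smul, real_inner_smul_left]⟩

/-- The Euclidean structure given by a positive definite form. -/
abbrev innerProductCoreOfPosDef {V : Type*} [AddCommGroup V] [Module ℝ V] {P : BilinForm ℝ V}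
    (hP : P.IsSymm) (hpos : ∀ x, x ≠ 0 → 0 < P x x) : InnerProductSpace.Core ℝ V where
  inner x y := P x y
  conj_inner_symm x y := hP.eq y x
  re_inner_nonneg x := by
    obtain rfl | hx := eq_or_ne x 0
    · simp
    · exact (hpos x hx).le
  add_left := by simp
  smul_left := by simp
  definite x hx := by_contra fun h ↦ (hpos x h).ne' hx

theorem exists_ne_zero_apply_eq_mul_of_posDef {V : Type*} [AddCommGroup V] [Module ℝ V]
    [FiniteDimensional ℝ V] [Nontrivial V] {B P : BilinForm ℝ V} (hB : B.IsSymm) (hP : P.IsSymm)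
    (hpos : ∀ x, x ≠ 0 → 0 < P x x) : ∃ (c : ℝ) (v : V), v ≠ 0 ∧ ∀ w, B v w = c * P v w :=
  let core := innerProductCoreOfPosDef hP hpos
  letI : NormedAddCommGroup V := core.toNormedAddCommGroup
  letI : InnerProductSpace ℝ V := InnerProductSpace.ofCore core.toCore
  exists_ne_zero_apply_eq_mul_inner hB

end Eigenvector

section LieModule

open LieAlgebra.InvariantForm

variable {R L M : Type*} [CommRing R] [LieRing L] [LieAlgebra R L] [AddCommGroup M] [Module R M]
  [LieRingModule L M]

omit [LieAlgebra R L] in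
theorem eq_zero_of_iSup_eq_top {κ N : Type*} [AddCommGroup N] [Module R N]
    {f : κ → LieSubmodule R L M} (htop : ⨆ k, f k = ⊤) {φ : M →ₗ[R] N}
    (h : ∀ k, ∀ x ∈ f k, φ x = 0) : φ = 0 := by
  rw [← LinearMap.ker_eq_top, eq_top_iff, ← LieSubmodule.top_toSubmodule (R := R) (L := L), ← htop,
    LieSubmodule.iSup_toSubmodule]
  exact iSup_le h

theorem lie_le_orthogonal_of_lie_eq_bot {Φ : BilinForm R M} (hΦ : Φ.lieInvariant L)
    {I : LieIdeal R L} {N : LieSubmodule R L M} (h : ⁅I, N⁆ = ⊥) (N' : LieSubmodule R L M) :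
    ⁅I, N'⁆ ≤ orthogonal Φ hΦ N := by
  refine (LieSubmodule.lie_le_iff _ _ _).2 fun x hx m _ ↦ (mem_orthogonal Φ hΦ N _).2 fun n hn ↦ ?_
  have hxn : ⁅x, n⁆ = 0 := (LieSubmodule.mem_bot _).1 (h ▸ LieSubmodule.lie_mem_lie hx hn)
  rw [← neg_eq_zero, ← hΦ, hxn, map_zero, LinearMap.zero_apply]

omit [LieAlgebra R L] in
theorem eq_zero_of_lieInvariant_of_isIrreducible [LieModule.IsIrreducible R L M]
    {Φ : BilinForm R M} (hΦ : Φ.lieInvariant L) {v : M} (hv : v ≠ 0) (h : ∀ x, Φ x v = 0) :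
    Φ = 0 := by
  have hne : orthogonal Φ hΦ ⊤ ≠ ⊥ := fun hbot ↦
    hv <| (LieSubmodule.mem_bot v).1 <| hbot ▸ (mem_orthogonal Φ hΦ ⊤ v).2 fun x _ ↦ h x
  have htop := (eq_bot_or_eq_top (orthogonal Φ hΦ ⊤)).resolve_left hne
  ext x y
  have hy : y ∈ orthogonal Φ hΦ ⊤ := htop.ge (LieSubmodule.mem_top y)
  exact (mem_orthogonal Φ hΦ ⊤ y).1 hy x (LieSubmodule.mem_top x)

theorem exists_eq_smul_of_isIrreducible [LieAlgebra ℝ L] [Module ℝ M] [LieModule ℝ L M]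
    [FiniteDimensional ℝ M] [LieModule.IsIrreducible ℝ L M] {Φ Ψ : BilinForm ℝ M}
    (hΦ : Φ.lieInvariant L) (hΦs : Φ.IsSymm) (hΨ : Ψ.lieInvariant L) (hΨs : Ψ.IsSymm)
    (hpos : ∀ x, x ≠ 0 → 0 < Ψ x x) : ∃ c : ℝ, Φ = c • Ψ := by
  have := LieModule.nontrivial_of_isIrreducible ℝ L M
  obtain ⟨c, v, hv, hcv⟩ := exists_ne_zero_apply_eq_mul_of_posDef hΦs hΨs hpos
  have hinv : (Φ - c • Ψ).lieInvariant L := by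
    rw [BilinForm.lieInvariant_iff] at *
    exact sub_mem hΦ (SMulMemClass.smul_mem c hΨ)
  refine ⟨c, sub_eq_zero.1 <| eq_zero_of_lieInvariant_of_isIrreducible hinv hv fun x ↦ ?_⟩
  simp only [LinearMap.sub_apply, LinearMap.smul_apply, smul_eq_mul, hΦs.eq x v, hΨs.eq x v, hcv,
    sub_self]

theorem isAtom_of_isSimple {I : LieIdeal R L} (hI : IsSimple R I) : IsAtom I := by
  refine ⟨fun h ↦ hI.non_abelian ?_, fun J hJ ↦ ?_⟩
  · subst h
    infer_instance
  · rcases hI.eq_bot_or_eq_top (J.comap I.incl) with h | h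
    · exact (LieIdeal.comap_incl_eq_bot.1 h).symm.eq_bot_of_le hJ.le
    · exact absurd (LieIdeal.comap_incl_eq_top.1 h) hJ.not_ge

theorem lie_self_eq_of_isSimple {I : LieIdeal R L} (hI : IsSimple R I) : ⁅I, I⁆ = I :=
  lie_eq_self_of_isAtom_of_nonabelian I (isAtom_of_isSimple hI) hI.non_abelian

end LieModule

namespace invSymmForms

variable {L κ : Type*} [LieRing L] [LieAlgebra ℝ L]

-- Unification does not match the additive structure of `invSymmForms L` with the one expected by
-- `Submodule.addCommGroup`.
noncomputable instance : AddCommGroup (invSymmForms L) := Module.addCommMonoidToAddCommGroup ℝ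

theorem lieInvariant (B : invSymmForms L) : BilinForm.lieInvariant L B.1 := fun x y z ↦ by
  rw [← lie_skew, map_neg, LinearMap.neg_apply, B.2.1]

theorem isSymm (B : invSymmForms L) : BilinForm.IsSymm B.1 := ⟨B.2.2⟩

theorem killingForm_mem : killingForm ℝ L ∈ invSymmForms L :=
  ⟨LieModule.traceForm_apply_lie_apply ℝ L L, LieModule.traceForm_comm ℝ L L⟩

theorem eq_symmForms_of_isLieAbelian [IsLieAbelian L] : invSymmForms L = symmForms ℝ L := by
  ext B
  exact ⟨fun hB ↦ ⟨hB.2⟩, fun hB ↦ ⟨fun x y z ↦ by simp [trivial_lie_zero], hB.eq⟩⟩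

theorem exists_eq_smul_of_isSimple [FiniteDimensional ℝ L] [IsSimple ℝ L] {P : invSymmForms L}
    (hP : ∀ x, x ≠ 0 → P.1 x x < 0) (B : invSymmForms L) : ∃ c : ℝ, B = c • P := by
  obtain ⟨c, hc⟩ := exists_eq_smul_of_isIrreducible (lieInvariant B) (isSymm B)
    (lieInvariant ((-1 : ℝ) • P)) (isSymm ((-1 : ℝ) • P)) fun x hx ↦ by
      simpa only [Submodule.coe_smul, LinearMap.smul_apply, smul_eq_mul, neg_one_mul, neg_pos]
        using hP x hx
  exact ⟨c * -1, Subtype.ext (hc.trans (smul_smul c (-1) P.1))⟩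

theorem ne_zero_of_negDef [Nontrivial L] {P : invSymmForms L} (hP : ∀ x, x ≠ 0 → P.1 x x < 0) :
    P ≠ 0 := by
  rintro rfl
  obtain ⟨x, hx⟩ := exists_ne (0 : L)
  exact (hP x hx).false

theorem finrank_eq_one_of_isSimple [FiniteDimensional ℝ L] [IsSimple ℝ L] {P : invSymmForms L}
    (hP : ∀ x, x ≠ 0 → P.1 x x < 0) : Module.finrank ℝ (invSymmForms L) = 1 := by
  have := IsSimple.nontrivial ℝ L
  refine finrank_eq_one P (ne_zero_of_negDef hP) fun B ↦ ?_
  obtain ⟨c, hc⟩ := exists_eq_smul_of_isSimple hP B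
  exact ⟨c, hc.symm⟩

/-- Restriction of invariant symmetric forms to an ideal. -/
noncomputable def restrict (I : LieIdeal ℝ L) : invSymmForms L →ₗ[ℝ] invSymmForms I where
  toFun B := ⟨B.1.compl₁₂ I.incl.toLinearMap I.incl.toLinearMap,
    fun _ _ _ ↦ B.2.1 _ _ _, fun _ _ ↦ B.2.2 _ _⟩
  map_add' _ _ := rfl
  map_smul' _ _ := rfl

theorem restrict_apply (I : LieIdeal ℝ L) (B : invSymmForms L) (x y : I) :
    (restrict I B).1 x y = B.1 x y := rfl

theorem restrict_negDef {I : LieIdeal ℝ L} {B : invSymmForms L}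
    (h : ∀ x ∈ I, x ≠ 0 → B.1 x x < 0) (x : I) (hx : x ≠ 0) : (restrict I B).1 x x < 0 :=
  h x x.2 (by simpa using hx)

theorem restrict_eq_zero {I : LieIdeal ℝ L} {B : invSymmForms L} (h : ∀ x ∈ I, B.1 x = 0) :
    restrict I B = 0 := by
  ext x y
  exact LinearMap.congr_fun (h x x.2) y

theorem apply_eq_zero_of_disjoint {I J : LieIdeal ℝ L} (hI : ⁅I, I⁆ = I) (hIJ : Disjoint I J)
    (B : invSymmForms L) {x y : L} (hx : x ∈ I) (hy : y ∈ J) : B.1 x y = 0 := by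
  have hbot : ⁅I, J⁆ = ⊥ := le_bot_iff.1 <| LieSubmodule.lie_le_inf I J |>.trans hIJ.le_bot
  have hle := lie_le_orthogonal_of_lie_eq_bot (lieInvariant B) hbot I
  rw [B.2.2]
  exact (InvariantForm.mem_orthogonal _ (lieInvariant B) J x).1 (hle (hI.symm ▸ hx)) y hy

theorem mem_of_codisjoint {I N : LieIdeal ℝ L} (hIN : Codisjoint I N) {B : L →ₗ[ℝ] L →ₗ[ℝ] ℝ}
    (hsymm : ∀ x y, B x y = B y x) (hN : ∀ x ∈ N, B x = 0)
    (hI : ∀ x ∈ I, ∀ y ∈ I, ∀ z ∈ I, B ⁅x, y⁆ z = B x ⁅y, z⁆) : B ∈ invSymmForms L := by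
  refine ⟨fun x y z ↦ ?_, hsymm⟩
  have hN' (x : L) {y : L} (hy : y ∈ N) : B x y = 0 := by rw [hsymm, hN y hy, LinearMap.zero_apply]
  have hdec (x : L) : ∃ a ∈ I, ∃ n ∈ N, a + n = x :=
    LieSubmodule.mem_sup _ _ x |>.1 (hIN.eq_top ▸ LieSubmodule.mem_top x)
  obtain ⟨a, ha, n, hn, rfl⟩ := hdec x
  obtain ⟨b, hb, p, hp, rfl⟩ := hdec y
  obtain ⟨c, hc, q, hq, rfl⟩ := hdec z
  have hl {u : L} (hu : u ∈ N) (v : L) : ⁅u, v⁆ ∈ N := lie_mem_left ℝ L N u v hu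
  have hr (u : L) {v : L} (hv : v ∈ N) : ⁅u, v⁆ ∈ N := lie_mem_right ℝ L N u v hv
  simp only [add_lie, lie_add, map_add, hN _ hn, hN _ (hl hn _), hN _ (hr _ hp), hN' _ hq,
    hN' _ (hl hp _), hN' _ (hr _ hq), hI a ha b hb c hc, add_zero]

theorem exists_restrict_eq {I N : LieIdeal ℝ L} (hIN : IsCompl I N) (C : invSymmForms I) :
    ∃ B : invSymmForms L, restrict I B = C ∧ ∀ x ∈ N, B.1 x = 0 := by
  let π : L →ₗ[ℝ] I := I.toSubmodule.projectionOnto N (LieSubmodule.isCompl_toSubmodule.2 hIN)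
  have hπI (x : I) : π x = x := Submodule.projectionOnto_apply_left _ x
  have hπN {x : L} (hx : x ∈ N) : π x = 0 := Submodule.projectionOnto_apply_of_mem_right _ hx
  have hmem : C.1.compl₁₂ π π ∈ invSymmForms L := by
    refine mem_of_codisjoint hIN.codisjoint (fun _ _ ↦ C.2.2 _ _) (fun x hx ↦ ?_)
      fun x hx y hy z hz ↦ ?_
    · ext y
      simp [hπN hx]
    · lift x to I using hx
      lift y to I using hy
      lift z to I using hz
      simpa [← LieSubmodule.coe_bracket, hπI] using C.2.1 x y z
  refine ⟨⟨_, hmem⟩, ?_, fun x hx ↦ ?_⟩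
  · ext x y
    simp [restrict_apply, hπI]
  · ext y
    simp [hπN hx]

section Decomposition

variable {f : κ → LieIdeal ℝ L}

theorem mem_of_iSup_eq_top (htop : ⨆ k, f k = ⊤) {B : L →ₗ[ℝ] L →ₗ[ℝ] ℝ}
    (hsymm : ∀ x y, B x y = B y x) (k : κ) (hB : ∀ l ≠ k, ∀ x ∈ f l, B x = 0)
    (hk : ∀ x ∈ f k, ∀ y ∈ f k, ∀ z ∈ f k, B ⁅x, y⁆ z = B x ⁅y, z⁆) : B ∈ invSymmForms L := by
  have hcod : Codisjoint (f k) (⨆ (l) (_ : l ≠ k), f l) := by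
    rw [codisjoint_iff, ← iSup_split_single, htop]
  have hle : (⨆ (l) (_ : l ≠ k), f l).toSubmodule ≤ LinearMap.ker B := by
    simp only [LieSubmodule.iSup_toSubmodule]
    exact iSup₂_le hB
  exact mem_of_codisjoint hcod hsymm hle hk

variable (hind : iSupIndep f) (htop : ⨆ k, f k = ⊤)
  (hperf : Pairwise fun k l ↦ ⁅f k, f k⁆ = f k ∨ ⁅f l, f l⁆ = f l)

include hind htop hperf

theorem apply_eq_zero_of_restrict_eq_zero {B : invSymmForms L} {k : κ}
    (h : restrict (f k) B = 0) : ∀ x ∈ f k, B.1 x = 0 := by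
  intro x hx
  refine eq_zero_of_iSup_eq_top htop fun l y hy ↦ ?_
  obtain rfl | hkl := eq_or_ne k l
  · exact LinearMap.congr_fun₂ (congr_arg Subtype.val h) ⟨x, hx⟩ ⟨y, hy⟩
  have hdisj := hind.pairwiseDisjoint hkl
  rcases hperf hkl with hk | hl
  · exact apply_eq_zero_of_disjoint hk hdisj B hx hy
  · rw [B.2.2]
    exact apply_eq_zero_of_disjoint hl hdisj.symm B hy hx

theorem pi_restrict_bijective [Finite κ] :
    Function.Bijective (LinearMap.pi fun k ↦ restrict (f k)) := by
  have := Fintype.ofFinite κ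
  refine ⟨(injective_iff_map_eq_zero _).2 fun B hB ↦ Subtype.ext ?_, fun C ↦ ?_⟩
  · exact eq_zero_of_iSup_eq_top htop fun k ↦ apply_eq_zero_of_restrict_eq_zero hind htop hperf
      (congr_fun hB k)
  · have hcompl (k : κ) : IsCompl (f k) (⨆ (l) (_ : l ≠ k), f l) :=
      ⟨hind k, by rw [codisjoint_iff, ← iSup_split_single, htop]⟩
    choose E hE hE₀ using fun k ↦ exists_restrict_eq (hcompl k) (C k)
    refine ⟨∑ k, E k, funext fun k ↦ ?_⟩
    have hne (l : κ) (hl : l ≠ k) : restrict (f k) (E l) = 0 :=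
      restrict_eq_zero fun x hx ↦ hE₀ l x (le_iSup₂ (f := fun m (_ : m ≠ l) ↦ f m) k hl.symm hx)
    rw [LinearMap.pi_apply, map_sum, Finset.sum_eq_single k (fun l _ ↦ hne l) (by simp), hE]

theorem finrank_eq_sum_finrank_of_iSupIndep [Fintype κ] [FiniteDimensional ℝ L] :
    Module.finrank ℝ (invSymmForms L) = ∑ k, Module.finrank ℝ (invSymmForms (f k)) := by
  rw [(LinearEquiv.ofBijective _ (pi_restrict_bijective hind htop hperf)).finrank_eq,
    Module.finrank_pi_fintype]

end Decomposition

end invSymmForms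

section Reductive

variable {R L ι : Type*} [CommRing R] [LieRing L] [LieAlgebra R L]

/-- A family of ideals together with the centre, which has index `none`. -/
def withCenter (g : ι → LieIdeal R L) : Option ι → LieIdeal R L
  | none => center R L
  | some i => g i

/-- The Lie algebra is the direct sum of its centre and the ideals `g i`, which are simple. -/
structure IsReductiveDecomposition (g : ι → LieIdeal R L) : Prop where
  isSimple : ∀ i, IsSimple R (g i)
  iSupIndep : iSupIndep (withCenter g)
  iSup_eq_top : ⨆ o, withCenter g o = ⊤

namespace IsReductiveDecomposition

theorem of_toSubmodule {g : ι → LieIdeal R L} (hsimple : ∀ i, IsSimple R (g i))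
    (hsup : (center R L).toSubmodule ⊔ ⨆ i, (g i).toSubmodule = ⊤)
    (hind : _root_.iSupIndep fun o : Option ι ↦
      o.elim (center R L).toSubmodule fun i ↦ (g i).toSubmodule) :
    IsReductiveDecomposition g where
  isSimple := hsimple
  iSupIndep := by
    rw [← LieSubmodule.iSupIndep_toSubmodule]
    convert hind with o
    cases o <;> rfl
  iSup_eq_top := by
    rw [← LieSubmodule.toSubmodule_inj, LieSubmodule.iSup_toSubmodule, iSup_option]
    exact hsup

theorem pairwise_lie_self_eq {g : ι → LieIdeal R L} (hg : IsReductiveDecomposition g) :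
    Pairwise fun k l ↦ ⁅withCenter g k, withCenter g k⁆ = withCenter g k ∨
      ⁅withCenter g l, withCenter g l⁆ = withCenter g l
  | some i, _, _ => .inl (lie_self_eq_of_isSimple (hg.isSimple i))
  | _, some i, _ => .inr (lie_self_eq_of_isSimple (hg.isSimple i))
  | none, none, h => (h rfl).elim

end IsReductiveDecomposition

end Reductive

namespace invSymmForms

variable {L ι : Type*} [LieRing L] [LieAlgebra ℝ L] {g : ι → LieIdeal ℝ L} {K : ι → invSymmForms L}

theorem mem_of_eqOn (hg : IsReductiveDecomposition g) {B : L →ₗ[ℝ] L →ₗ[ℝ] ℝ}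
    (hsymm : ∀ x y, B x y = B y x) (P : invSymmForms L) (i : ι)
    (hcenter : ∀ x ∈ center ℝ L, B x = 0) (hne : ∀ j ≠ i, ∀ x ∈ g j, B x = 0)
    (hP : ∀ x ∈ g i, ∀ y ∈ g i, B x y = P.1 x y) : B ∈ invSymmForms L := by
  refine mem_of_iSup_eq_top hg.iSup_eq_top hsymm (some i) ?_ fun x hx y hy z hz ↦ ?_
  · rintro (_ | j) hj
    exacts [hcenter, hne j (by simpa using hj)]
  · rw [hP _ (lie_mem_left ℝ L (g i) x y hx) z hz, hP x hx _ (lie_mem_left ℝ L (g i) y z hy), P.2.1]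

theorem mem_of_apply_eq_zero (hg : IsReductiveDecomposition g) {B : L →ₗ[ℝ] L →ₗ[ℝ] ℝ}
    (hsymm : ∀ x y, B x y = B y x) (h : ∀ i, ∀ x ∈ g i, B x = 0) : B ∈ invSymmForms L := by
  refine mem_of_iSup_eq_top hg.iSup_eq_top hsymm none ?_ fun x _ y hy z hz ↦ ?_
  · rintro (_ | j) hj
    exacts [(hj rfl).elim, h j]
  · have hxy : ⁅x, y⁆ = 0 := (LieModule.mem_maxTrivSubmodule ℝ L L y).1 hy x
    have hyz : ⁅y, z⁆ = 0 := (LieModule.mem_maxTrivSubmodule ℝ L L z).1 hz y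
    rw [hxy, hyz, map_zero, map_zero, LinearMap.zero_apply]

theorem linearIndependent_of_negDef [Finite ι] [∀ i, Nontrivial (g i)]
    (hK : Pairwise fun i j ↦ ∀ x ∈ g i, (K j).1 x = 0)
    (hneg : ∀ i, ∀ x ∈ g i, x ≠ 0 → (K i).1 x x < 0) : LinearIndependent ℝ K :=
  linearIndependent_of_pairwise_map_eq_zero (ρ := fun i ↦ restrict (g i))
    (fun _ _ hij ↦ restrict_eq_zero (hK hij))
    fun i ↦ ne_zero_of_negDef (restrict_negDef (hneg i))

variable [FiniteDimensional ℝ L]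

theorem exists_eq_add_sum_smul [Fintype ι] (hg : IsReductiveDecomposition g)
    (hK : Pairwise fun i j ↦ ∀ x ∈ g i, (K j).1 x = 0)
    (hneg : ∀ i, ∀ x ∈ g i, x ≠ 0 → (K i).1 x x < 0) (B : invSymmForms L) :
    ∃ (c : ι → ℝ) (B₀ : invSymmForms L), (∀ i, ∀ x ∈ g i, B₀.1 x = 0) ∧
      B = B₀ + ∑ i, c i • K i := by
  have hc (i : ι) : ∃ c : ℝ, restrict (g i) B = c • restrict (g i) (K i) :=
    have := hg.isSimple i
    exists_eq_smul_of_isSimple (restrict_negDef (hneg i)) _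
  choose c hc using hc
  refine ⟨c, B - ∑ i, c i • K i, fun i ↦ ?_, (sub_add_cancel _ _).symm⟩
  refine apply_eq_zero_of_restrict_eq_zero hg.iSupIndep hg.iSup_eq_top hg.pairwise_lie_self_eq
    (k := some i) ?_
  have hsum := map_sum_smul_of_pairwise_map_eq_zero (ρ := fun i ↦ restrict (g i))
    (fun _ _ hij ↦ restrict_eq_zero (hK hij)) c i
  exact (map_sub _ _ _).trans (sub_eq_zero.2 ((hc i).trans hsum.symm))

theorem finrank_of_isReductiveDecomposition [Fintype ι] (hg : IsReductiveDecomposition g)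
    (hneg : ∀ i, ∀ x ∈ g i, x ≠ 0 → (K i).1 x x < 0) :
    Module.finrank ℝ (invSymmForms L) =
      Module.finrank ℝ (center ℝ L) * (Module.finrank ℝ (center ℝ L) + 1) / 2 +
        Fintype.card ι := by
  have hsimple (i : ι) : Module.finrank ℝ (invSymmForms (g i)) = 1 :=
    have := hg.isSimple i
    finrank_eq_one_of_isSimple (restrict_negDef (hneg i))
  have hcenter : Module.finrank ℝ (invSymmForms (center ℝ L)) =
      Module.finrank ℝ (center ℝ L) * (Module.finrank ℝ (center ℝ L) + 1) / 2 := by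
    rw [eq_symmForms_of_isLieAbelian, finrank_symmForms]
  calc Module.finrank ℝ (invSymmForms L)
      = Module.finrank ℝ (invSymmForms (center ℝ L)) +
          ∑ i, Module.finrank ℝ (invSymmForms (g i)) := by
        rw [finrank_eq_sum_finrank_of_iSupIndep hg.iSupIndep hg.iSup_eq_top
          hg.pairwise_lie_self_eq, Fintype.sum_option]
        rfl
    _ = _ := by simp only [hcenter, hsimple, Finset.sum_const, Finset.card_univ, smul_eq_mul,
          mul_one]

end invSymmForms

/-- Let `𝔤 = 𝔷(𝔤) ⊕ 𝔤₁ ⊕ ⋯ ⊕ 𝔤ᵣ` with `𝔷(𝔤)` the centre and each `𝔤ᵢ`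
an ideal of `𝔤` which is a simple Lie algebra with negative-definite Killing form, and let
`K̃ᵢ` be the Killing form of `𝔤ᵢ` extended by zero.  Then a symmetric bilinear form `B` on
`𝔤` is invariant iff `B = B₀ + ∑ cᵢ K̃ᵢ` for reals `cᵢ` and a symmetric bilinear form `B₀`
on `𝔷(𝔤)` extended by zero; in particular the `K̃ᵢ` are linearly independent and the space
of invariant symmetric bilinear forms on `𝔤` has dimension `m(m+1)/2 + r` where
`m = dim 𝔷(𝔤)`. -/
theorem stmt10 {L : Type*} [LieRing L] [LieAlgebra ℝ L] [FiniteDimensional ℝ L]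
    (r : ℕ) (g : Fin r → LieIdeal ℝ L)
    (hsimple : ∀ i, LieAlgebra.IsSimple ℝ ↥(g i))
    (hneg : ∀ i, ∀ x ∈ g i, x ≠ 0 → killingForm ℝ L x x < 0)
    (hsup : (LieSubmodule.toSubmodule (LieAlgebra.center ℝ L) : Submodule ℝ L) ⊔
        (⨆ i, (LieSubmodule.toSubmodule (g i) : Submodule ℝ L)) = ⊤)
    (hindep : iSupIndep (fun o : Option (Fin r) =>
      Option.elim o (LieSubmodule.toSubmodule (LieAlgebra.center ℝ L) : Submodule ℝ L)
        (fun i => (LieSubmodule.toSubmodule (g i) : Submodule ℝ L))))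
    (Ktilde : Fin r → (L →ₗ[ℝ] L →ₗ[ℝ] ℝ))
    -- `K̃ᵢ` agrees on `𝔤ᵢ × 𝔤ᵢ` with the Killing form of the ideal `𝔤ᵢ`
    -- (which coincides there with the Killing form of `𝔤`) ...
    (hKt1 : ∀ i, ∀ x ∈ g i, ∀ y ∈ g i, Ktilde i x y = killingForm ℝ L x y)
    -- ... and vanishes as soon as one argument lies in `𝔷(𝔤)` or in some `𝔤ⱼ`, `j ≠ i`
    (hKt2 : ∀ i, ∀ x y : L,
      (x ∈ LieAlgebra.center ℝ L ∨ ∃ j, j ≠ i ∧ x ∈ g j) → Ktilde i x y = 0)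
    (hKt3 : ∀ i, ∀ x y : L, Ktilde i x y = Ktilde i y x) :
    (∀ B : L →ₗ[ℝ] L →ₗ[ℝ] ℝ, (∀ x y : L, B x y = B y x) →
      ((∀ x y z : L, B ⁅x, y⁆ z = B x ⁅y, z⁆) ↔
        ∃ (c : Fin r → ℝ) (B₀ : L →ₗ[ℝ] L →ₗ[ℝ] ℝ),
          (∀ x y : L, B₀ x y = B₀ y x) ∧
          (∀ x y : L, (∃ i, x ∈ g i) → B₀ x y = 0 ∧ B₀ y x = 0) ∧
          B = B₀ + ∑ i, c i • Ktilde i)) ∧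
    LinearIndependent ℝ Ktilde ∧
    Module.finrank ℝ ↥(invSymmForms L) =
      (Module.finrank ℝ ↥(LieSubmodule.toSubmodule (LieAlgebra.center ℝ L)) *
        (Module.finrank ℝ ↥(LieSubmodule.toSubmodule (LieAlgebra.center ℝ L)) + 1)) / 2
        + r := by
  have hg : IsReductiveDecomposition g := .of_toSubmodule hsimple hsup hindep
  have hKtne (i j : Fin r) (hji : j ≠ i) (x : L) (hx : x ∈ g j) : Ktilde i x = 0 :=
    LinearMap.ext fun y ↦ hKt2 i x y (.inr ⟨j, hji, hx⟩)
  have hmem (i : Fin r) : Ktilde i ∈ invSymmForms L :=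
    invSymmForms.mem_of_eqOn hg (hKt3 i) ⟨_, invSymmForms.killingForm_mem⟩ i
      (fun x hx ↦ LinearMap.ext fun y ↦ hKt2 i x y (.inl hx)) (hKtne i) (hKt1 i)
  let K (i : Fin r) : invSymmForms L := ⟨Ktilde i, hmem i⟩
  have hK : Pairwise fun i j ↦ ∀ x ∈ g i, (K j).1 x = 0 := fun i j hij ↦ hKtne j i hij
  have hKneg (i : Fin r) (x : L) (hx : x ∈ g i) (hx₀ : x ≠ 0) : (K i).1 x x < 0 :=
    (hKt1 i x hx x hx).trans_lt (hneg i x hx hx₀)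
  refine ⟨fun B hsymm ↦ ⟨fun hinv ↦ ?_, ?_⟩, ?_, ?_⟩
  · obtain ⟨c, B₀, hB₀, hB⟩ := invSymmForms.exists_eq_add_sum_smul hg hK hKneg ⟨B, hinv, hsymm⟩
    exact ⟨c, B₀, B₀.2.2, fun x y ⟨i, hx⟩ ↦ by simp [B₀.2.2 y x, hB₀ i x hx],
      by simpa [K] using congr_arg Subtype.val hB⟩
  · rintro ⟨c, B₀, hB₀symm, hB₀, rfl⟩
    have hB₀mem := invSymmForms.mem_of_apply_eq_zero hg hB₀symm fun i x hx ↦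
      LinearMap.ext fun y ↦ (hB₀ x y ⟨i, hx⟩).1
    exact (add_mem hB₀mem (sum_mem fun i _ ↦ Submodule.smul_mem _ (c i) (hmem i))).1
  · have (i : Fin r) := IsSimple.nontrivial ℝ (g i)
    exact (invSymmForms.linearIndependent_of_negDef hK hKneg).map_injOn (Submodule.subtype _)
      Subtype.val_injective.injOn
  · exact (invSymmForms.finrank_of_isReductiveDecomposition hg hKneg).trans
      (congr_arg _ (Fintype.card_fin r))
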